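/- arXiv:math/0201048 — 2 statements merged into one kernel-verified Lean document; each statement's English description precedes it below -/
import Mathlib

section
/- There exists an absolute constant C such that for any convex body K ⊂ B_∞^n and every 0 < t < 1, log N(K, √n B_2^n, t) ≤ C log²(2/t) · VC(K, t/4). -/
/-!
The proof finds many shattered sets of grid cells by a weighted splitting argument, with no random
selection of coordinates.

Put `s = t / 4`. A "question" is a pair `(i, j)` of a coordinate and an integer; a point answers it
`hi` if its `i`-th coordinate is at least `(j + 1) s`, and `lo` if it is at most `j s`. For convex
`K`, a set of `k` questions shattered by points of `K` gives a cube of side `s` in a projection of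
`K` to `k` coordinates (`Shatters.card_le_vcDim`), so shattered sets have size at most
`d = VC(K, t / 4)`.

Let `A` be a set of at least two points of `K`, separated at scale `t` in the normalised Euclidean
norm. The average over the coordinates of the variance on `A` is at least of order `t ^ 2`, whereas
a coordinate on which every question is answered `hi` or `lo` by fewer than `ε |A|` points, with
`ε = t ^ 2 / 128`, is concentrated on an interval of length `2 s`. Hence a proportion of at least
`t ^ 2 / 32` of the coordinates carry a question splitting `A` into two parts of size at least
`ε |A|` (`exists_many_splits`).

Give a shattered set `p` the weight `w ^ |p|`, with `w` of order `(d + 1) / (n t ^ 2)`, and let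
`L(A)` be the total weight of the sets shattered by `A`. For a good question `q`, let `F` be the
family of sets shattered by both parts of the split at `q`. If `F` has small weight for some `q`,
then `L(A)` is almost the sum of the values of `L` on the two parts. Otherwise adding `q` to the
members of `F`, for all good `q`, produces so many sets shattered by `A`, each obtained at most `d`
times, that `L(A)` is large again. By induction `|A| ^ α ≤ L(A)` with `α` of order
`1 / log (2 / t)` (`card_rpow_le_shatWeight`). On the other hand `L(A) ≤ (C / t ^ 3) ^ d`, as the
factor `n` in the number of questions cancels the one in `w` (`shatWeight_le`). Taking logarithms
bounds `log |A|`, and a separated set of maximal size is the set of centres of a cover.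
-/

open Pointwise

/-- The covering number `N(K, B, t)`: the minimal number of translates of `t • B`
needed to cover `K`. -/
noncomputable def covN {V : Type*} [AddCommGroup V] [Module ℝ V]
    (K B : Set V) (t : ℝ) : ℕ :=
  sInf {m : ℕ | ∃ s : Finset V, s.card = m ∧ K ⊆ ⋃ c ∈ s, (fun y => c + y) '' (t • B)}

/-- The VC dimension of `K ⊆ ℝⁿ` at scale `s`: the maximal cardinality of a set `σ` of
coordinates such that the coordinate projection of `K` onto `σ` contains a coordinate cube
`x + [0, s]^σ`. -/
noncomputable def vcDim {n : ℕ} (K : Set (Fin n → ℝ)) (s : ℝ) : ℕ :=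
  sSup {m : ℕ | ∃ σ : Finset (Fin n), σ.card = m ∧ ∃ x : Fin n → ℝ,
    ∀ z : Fin n → ℝ, (∀ i ∈ σ, z i ∈ Set.Icc (x i) (x i + s)) →
      ∃ k ∈ K, ∀ i ∈ σ, k i = z i}

/-- The cube `B_∞ⁿ = [-1,1]ⁿ`. -/
def cubeBall (n : ℕ) : Set (Fin n → ℝ) := {x | ∀ i, |x i| ≤ 1}

/-- The Euclidean unit ball `B_2ⁿ`. -/
def ball2 (n : ℕ) : Set (Fin n → ℝ) := {x | ∑ i, (x i) ^ 2 ≤ 1}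

/-! ### Shattering and weighted counting -/

section Shattering

variable {X Q : Type*}

/-- `A` shatters the finite set `p` of questions if every prescription of `hi`/`lo` answers to the
questions in `p` is realised by a point of `A`. A point may answer neither `hi` nor `lo`. -/
def Shatters (hi lo : Q → X → Prop) (A : Finset X) (p : Finset Q) : Prop :=
  ∀ τ ⊆ p, ∃ x ∈ A, ∀ q ∈ p, (q ∈ τ → hi q x) ∧ (q ∉ τ → lo q x)

open Classical in
/-- The subsets of `U` shattered by `A`. -/
noncomputable def shatFam (hi lo : Q → X → Prop) (U : Finset Q) (A : Finset X) :
    Finset (Finset Q) :=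
  U.powerset.filter (Shatters hi lo A)

/-- The weighted number of shattered sets, a set `p` having weight `w ^ |p|`. -/
noncomputable def shatWeight (hi lo : Q → X → Prop) (U : Finset Q) (w : ℝ) (A : Finset X) : ℝ :=
  ∑ p ∈ shatFam hi lo U A, w ^ p.card

variable {hi lo : Q → X → Prop} {U : Finset Q} {w : ℝ} {A B : Finset X} {p : Finset Q} {q : Q}

theorem Shatters.mono (h : Shatters hi lo B p) (hBA : B ⊆ A) : Shatters hi lo A p :=
  fun τ hτ => let ⟨x, hx, hx'⟩ := h τ hτ; ⟨x, hBA hx, hx'⟩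

theorem mem_shatFam : p ∈ shatFam hi lo U A ↔ p ⊆ U ∧ Shatters hi lo A p := by
  simp [shatFam]

theorem shatFam_mono (hBA : B ⊆ A) : shatFam hi lo U B ⊆ shatFam hi lo U A := fun p hp => by
  rw [mem_shatFam] at hp ⊢
  exact ⟨hp.1, hp.2.mono hBA⟩

open Classical in
/-- A set shattered both by the points answering `hi` to `q` and by those answering `lo` to `q`
does not contain `q`, and it remains shattered after adding `q`. -/
theorem shatFam_insert (hne : ∀ x, ¬ (hi q x ∧ lo q x)) (hq : q ∈ U)
    (h₁ : p ∈ shatFam hi lo U (A.filter (hi q)))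
    (h₂ : p ∈ shatFam hi lo U (A.filter (lo q))) :
    q ∉ p ∧ insert q p ∈ shatFam hi lo U A := by
  rw [mem_shatFam] at h₁ h₂
  have hqp : q ∉ p := by
    intro hqp
    obtain ⟨x, hx, hx'⟩ := h₁.2 ∅ (by simp)
    exact hne x ⟨(Finset.mem_filter.1 hx).2, (hx' q hqp).2 (by simp)⟩
  refine ⟨hqp, mem_shatFam.2 ⟨Finset.insert_subset hq h₁.1, fun τ hτ => ?_⟩⟩
  have hτ' : τ.erase q ⊆ p := by
    intro r hr
    rw [Finset.mem_erase] at hr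
    exact (Finset.mem_insert.1 (hτ hr.2)).resolve_left hr.1
  by_cases hqτ : q ∈ τ
  · obtain ⟨x, hx, hx'⟩ := h₁.2 _ hτ'
    rw [Finset.mem_filter] at hx
    refine ⟨x, hx.1, fun r hr => ?_⟩
    by_cases hrq : r = q
    · subst hrq; exact ⟨fun _ => hx.2, fun h => absurd hqτ h⟩
    · have := hx' r ((Finset.mem_insert.1 hr).resolve_left hrq)
      simpa [hrq] using this
  · obtain ⟨x, hx, hx'⟩ := h₂.2 _ hτ'
    rw [Finset.mem_filter] at hx
    refine ⟨x, hx.1, fun r hr => ?_⟩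
    by_cases hrq : r = q
    · subst hrq; exact ⟨fun h => absurd h hqτ, fun _ => hx.2⟩
    · have := hx' r ((Finset.mem_insert.1 hr).resolve_left hrq)
      simpa [hrq] using this

open Classical in
theorem shatWeight_split (hw : 0 ≤ w) (q : Q) :
    shatWeight hi lo U w (A.filter (hi q)) + shatWeight hi lo U w (A.filter (lo q)) ≤
      shatWeight hi lo U w A + ∑ p ∈ shatFam hi lo U (A.filter (hi q)) ∩
        shatFam hi lo U (A.filter (lo q)), w ^ p.card := by
  unfold shatWeight
  rw [← Finset.sum_union_inter]
  gcongr
  exact Finset.union_subset (shatFam_mono (Finset.filter_subset _ _))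
    (shatFam_mono (Finset.filter_subset _ _))

open Classical in
/-- Each `p` common to the two halves of a split at `q` yields the shattered set `insert q p`;
summed over the questions in `G`, a shattered set is obtained at most `d` times. -/
theorem sum_inter_le {G : Finset Q} {d : ℕ} (hw : 0 ≤ w)
    (hne : ∀ q x, ¬ (hi q x ∧ lo q x)) (hG : G ⊆ U)
    (hd : ∀ p, Shatters hi lo A p → p.card ≤ d) :
    ∑ q ∈ G, w * ∑ p ∈ shatFam hi lo U (A.filter (hi q)) ∩
        shatFam hi lo U (A.filter (lo q)), w ^ p.card ≤ d * shatWeight hi lo U w A := by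
  have key : ∀ q ∈ G, w * ∑ p ∈ shatFam hi lo U (A.filter (hi q)) ∩
        shatFam hi lo U (A.filter (lo q)), w ^ p.card ≤
        ∑ p ∈ shatFam hi lo U A, if q ∈ p then w ^ p.card else 0 := by
    intro q hq
    have hins : ∀ p ∈ shatFam hi lo U (A.filter (hi q)) ∩ shatFam hi lo U (A.filter (lo q)),
        q ∉ p ∧ insert q p ∈ shatFam hi lo U A := fun p hp =>
      shatFam_insert (hne q) (hG hq) (Finset.mem_inter.1 hp).1 (Finset.mem_inter.1 hp).2
    rw [Finset.mul_sum, ← Finset.sum_filter]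
    calc _ = ∑ p ∈ (shatFam hi lo U (A.filter (hi q)) ∩
            shatFam hi lo U (A.filter (lo q))).image (insert q), w ^ p.card := by
          rw [Finset.sum_image]
          · refine Finset.sum_congr rfl fun p hp => ?_
            rw [Finset.card_insert_of_notMem (hins p hp).1, pow_succ']
          · intro p hp p' hp' h
            rw [← Finset.erase_insert (hins p hp).1, ← Finset.erase_insert (hins p' hp').1]
            exact congrArg (fun s => Finset.erase s q) h
      _ ≤ _ := by
          refine Finset.sum_le_sum_of_subset_of_nonneg ?_ fun _ _ _ => by positivity
          intro p hp
          obtain ⟨p', hp', rfl⟩ := Finset.mem_image.1 hp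
          exact Finset.mem_filter.2 ⟨(hins p' hp').2, Finset.mem_insert_self _ _⟩
  refine (Finset.sum_le_sum key).trans ?_
  rw [Finset.sum_comm, shatWeight, Finset.mul_sum]
  refine Finset.sum_le_sum fun p hp => ?_
  rw [← Finset.sum_filter, Finset.sum_const, nsmul_eq_mul]
  gcongr
  refine le_trans (Finset.card_le_card ?_) (hd p (mem_shatFam.1 hp).2)
  intro r hr
  exact (Finset.mem_filter.1 hr).2

open Classical in
/-- If every subset of `A` with at least two points admits many questions that split it into
non-negligible parts, then the weighted number of sets shattered by `A` is at least a power
of `|A|`. -/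
theorem card_rpow_le_shatWeight {d : ℕ} {ε α : ℝ} (hw : 0 < w) (hε : 0 < ε) (hα : 0 ≤ α)
    (hεα : 1 ≤ 3 / 2 * ε ^ α) (hne : ∀ q x, ¬ (hi q x ∧ lo q x))
    (hd : ∀ p, Shatters hi lo A p → p.card ≤ d)
    (hsplit : ∀ B ⊆ A, 2 ≤ B.card → ∃ G ⊆ U, 3 * ((d : ℝ) + 1) ≤ G.card * w ∧ ∀ q ∈ G,
      ε * B.card ≤ (B.filter (hi q)).card ∧ ε * B.card ≤ (B.filter (lo q)).card)
    (hA : A.Nonempty) : (A.card : ℝ) ^ α ≤ shatWeight hi lo U w A := by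
  induction A using Finset.strongInduction with
  | H A ih =>
  by_cases h2 : A.card < 2
  · have hc : A.card = 1 := by have := hA.card_pos; omega
    have hmem : ∅ ∈ shatFam hi lo U A := by
      rw [mem_shatFam]
      refine ⟨by simp, fun τ hτ => ?_⟩
      obtain ⟨x, hx⟩ := hA
      exact ⟨x, hx, by simp⟩
    have := Finset.single_le_sum (f := fun p : Finset Q => w ^ p.card)
      (fun p _ => by positivity) hmem
    simpa [hc, shatWeight] using this
  · push Not at h2
    obtain ⟨G, hGU, hGw, hG⟩ := hsplit A subset_rfl h2
    have hApos : (0 : ℝ) < A.card := by exact_mod_cast hA.card_pos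
    set M : ℝ := (ε * A.card) ^ α with hM
    have hMpos : 0 < M := by positivity
    have hpart : ∀ (f g : X → Prop), (∀ x, ¬ (f x ∧ g x)) →
        ε * A.card ≤ (A.filter f).card → ε * A.card ≤ (A.filter g).card →
        M ≤ shatWeight hi lo U w (A.filter f) := by
      intro f g hfg hf hg
      have hpos : ∀ h : X → Prop, ε * A.card ≤ (A.filter h).card → (A.filter h).Nonempty := by
        intro h hh
        rw [← Finset.card_pos]
        have : (0 : ℝ) < (A.filter h).card := lt_of_lt_of_le (by positivity) hh
        exact_mod_cast this
      have hss : A.filter f ⊂ A := by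
        rw [Finset.filter_ssubset]
        obtain ⟨x, hx⟩ := hpos g hg
        rw [Finset.mem_filter] at hx
        exact ⟨x, hx.1, fun h => hfg x ⟨h, hx.2⟩⟩
      refine le_trans ?_ (ih _ hss (fun p hp => hd p (hp.mono hss.1))
        (fun B hB => hsplit B (hB.trans hss.1)) (hpos f hf))
      exact Real.rpow_le_rpow (by positivity) hf hα
    have hfin : 3 / 2 * M ≤ shatWeight hi lo U w A := by
      by_cases hex : ∃ q ∈ G, ∑ p ∈ shatFam hi lo U (A.filter (hi q)) ∩
        shatFam hi lo U (A.filter (lo q)), w ^ p.card ≤ M / 2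
      · obtain ⟨q, hq, hle⟩ := hex
        have h1 := hpart (hi q) (lo q) (hne q) (hG q hq).1 (hG q hq).2
        have h3 := hpart (lo q) (hi q) (fun x hx => hne q x hx.symm) (hG q hq).2 (hG q hq).1
        have := shatWeight_split (hi := hi) (lo := lo) (U := U) (A := A) hw.le q
        linarith
      · push Not at hex
        have hle := sum_inter_le (U := U) hw.le hne hGU hd
        have hge : G.card * (w * (M / 2)) ≤ ∑ q ∈ G, w * ∑ p ∈ shatFam hi lo U (A.filter (hi q)) ∩
            shatFam hi lo U (A.filter (lo q)), w ^ p.card := by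
          rw [← nsmul_eq_mul]
          refine Finset.card_nsmul_le_sum _ _ _ fun q hq => ?_
          have := hex q hq
          gcongr
        have hL : 0 ≤ shatWeight hi lo U w A := Finset.sum_nonneg fun p _ => by positivity
        have hd1 : (0 : ℝ) < (d : ℝ) + 1 := by positivity
        have h5 : 3 * ((d : ℝ) + 1) * (M / 2) ≤ ((d : ℝ) + 1) * shatWeight hi lo U w A := by
          calc 3 * ((d : ℝ) + 1) * (M / 2) ≤ G.card * w * (M / 2) := by gcongr
            _ ≤ d * shatWeight hi lo U w A := by linarith
            _ ≤ _ := by gcongr; linarith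
        refine le_of_mul_le_mul_left ?_ hd1
        linarith
    calc (A.card : ℝ) ^ α ≤ 3 / 2 * ε ^ α * (A.card : ℝ) ^ α :=
          le_mul_of_one_le_left (by positivity) hεα
      _ = 3 / 2 * M := by rw [hM, Real.mul_rpow hε.le hApos.le]; ring
      _ ≤ _ := hfin

/-- If `A` shatters no set of more than `d` questions, then grouping the shattered sets by
cardinality and `C(m, k) ≤ m ^ k / k!` bound their weighted number. -/
theorem shatWeight_le {d : ℕ} {T : ℝ} (hw : 0 ≤ w) (hT : 1 ≤ T)
    (hd : ∀ p, Shatters hi lo A p → p.card ≤ d)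
    (hTw : U.card * w ≤ T * ((d : ℝ) + 1)) :
    shatWeight hi lo U w A ≤ (2 * T) ^ d * Real.exp d := by
  calc shatWeight hi lo U w A ≤ ∑ p ∈ U.powerset.filter (fun p => p.card < d + 1), w ^ p.card := by
        refine Finset.sum_le_sum_of_subset_of_nonneg ?_ fun _ _ _ => by positivity
        intro p hp
        rw [mem_shatFam] at hp
        have := hd p hp.2
        rw [Finset.mem_filter, Finset.mem_powerset]
        exact ⟨hp.1, by omega⟩
    _ = ∑ k ∈ Finset.range (d + 1), (U.card.choose k : ℝ) * w ^ k := by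
        rw [← Finset.sum_fiberwise_of_maps_to (g := Finset.card) (t := Finset.range (d + 1))
          (fun p hp => by simpa using (Finset.mem_filter.1 hp).2)]
        refine Finset.sum_congr rfl fun k hk => ?_
        have : ((U.powerset.filter (fun p => p.card < d + 1)).filter (fun p => p.card = k)) =
            U.powersetCard k := by
          ext p
          simp only [Finset.mem_filter, Finset.mem_powerset, Finset.mem_powersetCard,
            Finset.mem_range] at hk ⊢
          constructor
          · rintro ⟨⟨h1, _⟩, h3⟩; exact ⟨h1, h3⟩
          · rintro ⟨h1, h3⟩; exact ⟨⟨h1, by omega⟩, h3⟩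
        rw [this, Finset.sum_congr rfl (g := fun _ => w ^ k), Finset.sum_const,
          Finset.card_powersetCard, nsmul_eq_mul]
        intro p hp
        rw [(Finset.mem_powersetCard.1 hp).2]
    _ ≤ ∑ k ∈ Finset.range (d + 1), (2 * T) ^ d * ((d : ℝ) ^ k / k.factorial) := by
        refine Finset.sum_le_sum fun k hk => ?_
        rw [Finset.mem_range] at hk
        have hT2 : (1 : ℝ) ≤ 2 * T := by linarith
        -- the case `d = 0` relies on `0 ^ 0 = 1`
        have hdd : ((d : ℝ) + 1) ^ k ≤ (2 * d) ^ k := by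
          rcases Nat.eq_zero_or_pos d with h0 | h0
          · have : k = 0 := by omega
            simp [this]
          · have : (1 : ℝ) ≤ d := by exact_mod_cast h0
            gcongr
            linarith
        calc (U.card.choose k : ℝ) * w ^ k ≤ (U.card : ℝ) ^ k / k.factorial * w ^ k := by
              gcongr
              exact Nat.choose_le_pow_div k U.card
          _ = (U.card * w) ^ k / k.factorial := by rw [mul_pow]; ring
          _ ≤ (T * ((d : ℝ) + 1)) ^ k / k.factorial := by gcongr
          _ = T ^ k * ((d : ℝ) + 1) ^ k / k.factorial := by rw [mul_pow]
          _ ≤ T ^ k * (2 * d) ^ k / k.factorial := by gcongr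
          _ = (2 * T) ^ k * ((d : ℝ) ^ k / k.factorial) := by
              rw [mul_pow, mul_pow]; ring
          _ ≤ _ := by
              gcongr ?_ * _
              exact pow_le_pow_right₀ hT2 (by omega)
    _ = (2 * T) ^ d * ∑ k ∈ Finset.range (d + 1), ((d : ℝ) ^ k / k.factorial) := by
        rw [Finset.mul_sum]
    _ ≤ _ := by
        gcongr
        exact Real.sum_le_exp_of_nonneg (by positivity) _

end Shattering

/-! ### Cubes in projections of convex sets -/

/-- A convex set meeting all the orthants around `z` determined by the coordinates in `σ`
contains a point agreeing with `z` on `σ`. -/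
theorem exists_eq_on_of_orthants {n : ℕ} (z : Fin n → ℝ) (σ : Finset (Fin n)) :
    ∀ K : Set (Fin n → ℝ), Convex ℝ K →
      (∀ τ ⊆ σ, ∃ k ∈ K, ∀ i ∈ σ, (i ∈ τ → z i ≤ k i) ∧ (i ∉ τ → k i ≤ z i)) →
      ∃ k ∈ K, ∀ i ∈ σ, k i = z i := by
  induction σ using Finset.induction_on with
  | empty =>
    intro K _ h
    obtain ⟨k, hk, _⟩ := h ∅ subset_rfl
    exact ⟨k, hk, by simp⟩
  | insert i σ hi ih =>
    intro K hK h
    obtain ⟨a, ⟨haK, hai⟩, ha⟩ := ih (K ∩ {k | z i ≤ k i})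
      (hK.inter (convex_halfSpace_ge (LinearMap.proj (R := ℝ) i).isLinear _)) (by
        intro τ hτ
        obtain ⟨k, hk, hk'⟩ := h (insert i τ) (Finset.insert_subset_insert i hτ)
        refine ⟨k, ⟨hk, (hk' i (by simp)).1 (by simp)⟩, fun r hr => ?_⟩
        have hri : r ≠ i := fun h => hi (h ▸ hr)
        simpa [hri] using hk' r (Finset.mem_insert_of_mem hr))
    obtain ⟨b, ⟨hbK, hbi⟩, hb⟩ := ih (K ∩ {k | k i ≤ z i})
      (hK.inter (convex_halfSpace_le (LinearMap.proj (R := ℝ) i).isLinear _)) (by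
        intro τ hτ
        have hiτ : i ∉ τ := fun h => hi (hτ h)
        obtain ⟨k, hk, hk'⟩ := h τ (hτ.trans (Finset.subset_insert _ _))
        exact ⟨k, ⟨hk, (hk' i (by simp)).2 hiτ⟩,
          fun r hr => hk' r (Finset.mem_insert_of_mem hr)⟩)
    rw [Set.mem_ofPred_eq] at hai hbi
    have hz : z i ∈ segment ℝ (b i) (a i) := by
      rw [segment_eq_Icc (hbi.trans hai)]; exact ⟨hbi, hai⟩
    obtain ⟨u, v, hu, hv, huv, hz⟩ := hz
    refine ⟨u • b + v • a, hK hbK haK hu hv huv, fun r hr => ?_⟩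
    rcases Finset.mem_insert.1 hr with rfl | hr
    · simpa using hz
    · simp only [Pi.add_apply, Pi.smul_apply, smul_eq_mul, ha r hr, hb r hr, ← add_mul, huv,
        one_mul]

/-- The question `(i, j)` is answered `hi` by the points with `i`-th coordinate at least
`(j + 1) s`. -/
def cellHi (n : ℕ) (s : ℝ) (q : Fin n × ℤ) (x : Fin n → ℝ) : Prop := ((q.2 : ℝ) + 1) * s ≤ x q.1

/-- The question `(i, j)` is answered `lo` by the points with `i`-th coordinate at most `j s`. -/
def cellLo (n : ℕ) (s : ℝ) (q : Fin n × ℤ) (x : Fin n → ℝ) : Prop := x q.1 ≤ (q.2 : ℝ) * s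

/-- Shattered sets of questions come from coordinate cubes in projections of `K`. -/
theorem Shatters.card_le_vcDim {n : ℕ} {s : ℝ} (hs : 0 < s) {K : Set (Fin n → ℝ)}
    (hK : Convex ℝ K) {A : Finset (Fin n → ℝ)} (hA : (A : Set (Fin n → ℝ)) ⊆ K)
    {p : Finset (Fin n × ℤ)} (hp : Shatters (cellHi n s) (cellLo n s) A p) :
    p.card ≤ vcDim K s := by
  -- opposite answers to `(i, j)` and `(i, j')` would force both `j < j'` and `j' < j`
  have hlt : ∀ q ∈ p, ∀ q' ∈ p, q ≠ q' → q.1 = q'.1 → q.2 < q'.2 := by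
    intro q hq q' hq' hne h1
    obtain ⟨x, _, hx⟩ := hp {q} (by simpa using hq)
    have ha : ((q.2 : ℝ) + 1) * s ≤ x q.1 := (hx q hq).1 (by simp)
    have hb : x q'.1 ≤ (q'.2 : ℝ) * s := (hx q' hq').2 (by simpa using hne.symm)
    rw [h1] at ha
    have := le_of_mul_le_mul_right (ha.trans hb) hs
    have : q.2 + 1 ≤ q'.2 := by exact_mod_cast this
    omega
  have hinj : Set.InjOn Prod.fst (p : Set (Fin n × ℤ)) := by
    intro q hq q' hq' h
    by_contra hne
    have := hlt q hq q' hq' hne h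
    have := hlt q' hq' q hq (Ne.symm hne) h.symm
    omega
  have hex : ∀ i : Fin n, ∃ j : ℤ, i ∈ p.image Prod.fst → (i, j) ∈ p := by
    intro i
    by_cases hi : i ∈ p.image Prod.fst
    · obtain ⟨⟨i', j⟩, hq, rfl⟩ := Finset.mem_image.1 hi
      exact ⟨j, fun _ => hq⟩
    · exact ⟨0, fun h => absurd h hi⟩
  choose J hJ using hex
  refine le_csSup ⟨n, ?_⟩ ⟨p.image Prod.fst, Finset.card_image_of_injOn hinj,
    fun i => (J i : ℝ) * s, fun z hz => ?_⟩
  · rintro m ⟨σ, rfl, _⟩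
    simpa using Finset.card_le_univ σ
  · refine exists_eq_on_of_orthants z _ K hK fun τ _ => ?_
    obtain ⟨x, hxA, hx⟩ := hp (p.filter fun q => q.1 ∈ τ) (Finset.filter_subset _ _)
    refine ⟨x, hA hxA, fun i hi => ⟨fun hiτ => ?_, fun hiτ => ?_⟩⟩
    · have h : ((J i : ℝ) + 1) * s ≤ x i := (hx _ (hJ i hi)).1 (by simp [hJ i hi, hiτ])
      have := (hz i hi).2
      linarith
    · have h : x i ≤ (J i : ℝ) * s := (hx _ (hJ i hi)).2 (by simp [hiτ])
      exact h.trans (hz i hi).1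

/-! ### Splitting separated sets -/

open Classical in
/-- A coordinate that no grid cell of length `s` splits well is concentrated, up to a proportion
`2 ε` of the points, on an interval of length `2 s`, so it contributes little to the
pairwise distances. -/
theorem sum_sq_le_of_not_split {n : ℕ} {s ε : ℝ} (hs : 0 < s) (hε : 0 < ε) (hε1 : ε ≤ 1)
    {A : Finset (Fin n → ℝ)} (hA : ∀ x ∈ A, ∀ i, |x i| ≤ 1) (hne : A.Nonempty) (i : Fin n)
    (hbad : ∀ j : ℤ, ε * A.card ≤ (A.filter (cellLo n s (i, j))).card →
      ((A.filter (cellHi n s (i, j))).card : ℝ) < ε * A.card) :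
    ∑ x ∈ A, ∑ y ∈ A, (x i - y i) ^ 2 ≤ (4 * s ^ 2 + 16 * ε) * (A.card : ℝ) ^ 2 := by
  have hApos : (0 : ℝ) < A.card := by exact_mod_cast hne.card_pos
  have hbound : ∀ x ∈ A, -1 ≤ x i ∧ x i ≤ 1 := fun x hx => abs_le.1 (hA x hx i)
  -- `j` is the first grid point with a non-negligible proportion of the points below it
  obtain ⟨j, hj, hjmin⟩ := Int.exists_least_of_bdd
    (P := fun j : ℤ => ε * A.card ≤ (A.filter (cellLo n s (i, j))).card) (by
      refine ⟨⌊-1 / s⌋, fun j hj => ?_⟩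
      have : (0 : ℝ) < (A.filter (cellLo n s (i, j))).card := lt_of_lt_of_le (by positivity) hj
      obtain ⟨x, hx⟩ := Finset.card_pos.1 (by exact_mod_cast this)
      rw [Finset.mem_filter] at hx
      have h1 : x i ≤ (j : ℝ) * s := hx.2
      have h2 : -1 / s ≤ (j : ℝ) := by
        rw [div_le_iff₀ hs]; linarith [(hbound x hx.1).1]
      exact_mod_cast (Int.floor_le _).trans h2) (by
      -- every point lies below the grid point `⌈1 / s⌉ s`
      refine ⟨⌈1 / s⌉, ?_⟩
      have : A.filter (cellLo n s (i, ⌈1 / s⌉)) = A := by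
        rw [Finset.filter_eq_self]
        intro x hx
        have hc := Int.le_ceil (1 / s)
        rw [div_le_iff₀ hs] at hc
        exact (hbound x hx).2.trans hc
      rw [this]
      exact mul_le_of_le_one_left hApos.le hε1)
  have hlow : ((A.filter (cellLo n s (i, j - 1))).card : ℝ) ≤ ε * A.card := by
    by_contra! h
    have := hjmin _ h.le
    omega
  have hhigh := hbad j hj
  set L := A.filter (cellLo n s (i, j - 1)) with hL
  set H := A.filter (cellHi n s (i, j)) with hH
  have hout : ((L ∪ H).card : ℝ) ≤ 2 * ε * A.card := by
    have : ((L ∪ H).card : ℝ) ≤ L.card + H.card := by exact_mod_cast Finset.card_union_le L H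
    linarith
  have hin : ∀ x ∈ A, x ∉ L ∪ H → ((j : ℝ) - 1) * s < x i ∧ x i < ((j : ℝ) + 1) * s := by
    intro x hx hxLH
    rw [Finset.mem_union, not_or, hL, hH, Finset.mem_filter, Finset.mem_filter] at hxLH
    refine ⟨?_, ?_⟩
    · have : ¬ cellLo n s (i, j - 1) x := fun h => hxLH.1 ⟨hx, h⟩
      simpa [cellLo] using this
    · have : ¬ cellHi n s (i, j) x := fun h => hxLH.2 ⟨hx, h⟩
      simpa [cellHi] using this
  have hpair : ∀ x ∈ A, ∀ y ∈ A, (x i - y i) ^ 2 ≤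
      4 * s ^ 2 + (if x ∈ L ∪ H then 4 else 0) + (if y ∈ L ∪ H then 4 else 0) := by
    intro x hx y hy
    have h4 : (x i - y i) ^ 2 ≤ 4 := by
      have hx1 := hbound x hx
      have hy1 := hbound y hy
      have : |x i - y i| ≤ 2 := abs_le.2 ⟨by linarith, by linarith⟩
      calc (x i - y i) ^ 2 ≤ 2 ^ 2 := sq_le_sq' (abs_le.1 this).1 (abs_le.1 this).2
        _ = 4 := by norm_num
    have hs2 : 0 ≤ 4 * s ^ 2 := by positivity
    by_cases hxo : x ∈ L ∪ H
    · rw [if_pos hxo]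
      split_ifs <;> linarith
    by_cases hyo : y ∈ L ∪ H
    · rw [if_pos hyo, if_neg hxo]
      linarith
    rw [if_neg hxo, if_neg hyo]
    have hx1 := hin x hx hxo
    have hy1 := hin y hy hyo
    calc (x i - y i) ^ 2 ≤ (2 * s) ^ 2 := sq_le_sq' (by linarith) (by linarith)
      _ = _ := by ring
  have hcount : ∑ x ∈ A, (if x ∈ L ∪ H then (4 : ℝ) else 0) = 4 * (L ∪ H).card := by
    rw [← Finset.sum_filter, Finset.sum_const, nsmul_eq_mul, Finset.filter_mem_eq_inter,
      Finset.inter_eq_right.2 (Finset.union_subset (Finset.filter_subset _ _)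
        (Finset.filter_subset _ _)), mul_comm]
  calc ∑ x ∈ A, ∑ y ∈ A, (x i - y i) ^ 2
      ≤ ∑ x ∈ A, ∑ y ∈ A, (4 * s ^ 2 + (if x ∈ L ∪ H then (4 : ℝ) else 0) +
          (if y ∈ L ∪ H then (4 : ℝ) else 0)) :=
        Finset.sum_le_sum fun x hx => Finset.sum_le_sum fun y hy => hpair x hx y hy
    _ = 4 * s ^ 2 * (A.card : ℝ) ^ 2 + 8 * (L ∪ H).card * A.card := by
        simp only [Finset.sum_add_distrib, hcount, Finset.sum_const, nsmul_eq_mul,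
          ← Finset.mul_sum]
        ring
    _ ≤ 4 * s ^ 2 * (A.card : ℝ) ^ 2 + 8 * (2 * ε * A.card) * A.card := by gcongr
    _ = _ := by ring

open Classical in
/-- A separated set in the cube is split well by grid cells in a proportion at least `t ^ 2 / 32`
of the coordinates. -/
theorem exists_many_splits {n : ℕ} {t : ℝ} (ht : 0 < t) (ht1 : t < 1)
    {A : Finset (Fin n → ℝ)} (hA : ∀ x ∈ A, ∀ i, |x i| ≤ 1) (h2 : 2 ≤ A.card)
    (hsep : ∀ x ∈ A, ∀ y ∈ A, x ≠ y → t ^ 2 * n ≤ ∑ i, (x i - y i) ^ 2) :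
    ∃ G ⊆ Finset.univ ×ˢ Finset.Icc (-⌈4 / t⌉) ⌈4 / t⌉, t ^ 2 * n / 32 ≤ (G.card : ℝ) ∧
      ∀ q ∈ G, t ^ 2 / 128 * A.card ≤ (A.filter (cellHi n (t / 4) q)).card ∧
        t ^ 2 / 128 * A.card ≤ (A.filter (cellLo n (t / 4) q)).card := by
  set ε : ℝ := t ^ 2 / 128 with hε
  have hεpos : 0 < ε := by positivity
  have hε1 : ε ≤ 1 := by nlinarith
  have hs : 0 < t / 4 := by positivity
  have hN : (2 : ℝ) ≤ A.card := by exact_mod_cast h2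
  have hne : A.Nonempty := Finset.card_pos.1 (by omega)
  set good : Fin n → ℤ → Prop := fun i j =>
    ε * A.card ≤ (A.filter (cellHi n (t / 4) (i, j))).card ∧
        ε * A.card ≤ (A.filter (cellLo n (t / 4) (i, j))).card with hgood
  set I : Finset (Fin n) := Finset.univ.filter fun i => ∃ j, good i j with hI
  have hch : ∀ i : Fin n, ∃ j, i ∈ I → good i j := by
    intro i
    by_cases hi : i ∈ I
    · obtain ⟨j, hj⟩ := (Finset.mem_filter.1 hi).2
      exact ⟨j, fun _ => hj⟩
    · exact ⟨0, fun h => absurd h hi⟩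
  choose J hJ using hch
  refine ⟨I.image fun i => (i, J i), ?_, ?_, ?_⟩
  · intro q hq
    obtain ⟨i, hi, rfl⟩ := Finset.mem_image.1 hq
    have hpos : ∀ P : (Fin n → ℝ) → Prop, ε * A.card ≤ (A.filter P).card → ∃ x ∈ A, P x := by
      intro P hP
      have : (0 : ℝ) < (A.filter P).card := lt_of_lt_of_le (by positivity) hP
      obtain ⟨x, hx⟩ := Finset.card_pos.1 (by exact_mod_cast this)
      exact ⟨x, Finset.mem_filter.1 hx⟩
    obtain ⟨x, hxA, hx⟩ := hpos _ (hJ i hi).1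
    obtain ⟨y, hyA, hy⟩ := hpos _ (hJ i hi).2
    have hx : ((J i : ℝ) + 1) * (t / 4) ≤ x i := hx
    have hy : y i ≤ (J i : ℝ) * (t / 4) := hy
    have hx1 := (abs_le.1 (hA x hxA i)).2
    have hy1 := (abs_le.1 (hA y hyA i)).1
    have hup : (J i : ℝ) ≤ 4 / t := by rw [le_div_iff₀ ht]; linarith
    have hdown : -(J i : ℝ) ≤ 4 / t := by rw [le_div_iff₀ ht]; linarith
    have hc := Int.le_ceil (4 / t)
    rw [Finset.mem_product, Finset.mem_Icc]
    refine ⟨Finset.mem_univ _, ?_, ?_⟩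
    · have : -(J i) ≤ ⌈4 / t⌉ := by exact_mod_cast hdown.trans hc
      show -⌈4 / t⌉ ≤ J i
      omega
    · exact_mod_cast hup.trans hc
  · rw [Finset.card_image_of_injective _ fun i i' h => (Prod.ext_iff.1 h).1]
    have hlower : t ^ 2 * n * ((A.card : ℝ) ^ 2 / 2) ≤
        ∑ i, ∑ x ∈ A, ∑ y ∈ A, (x i - y i) ^ 2 := by
      have hswap : ∑ i, ∑ x ∈ A, ∑ y ∈ A, (x i - y i) ^ 2 =
          ∑ x ∈ A, ∑ y ∈ A, ∑ i, (x i - y i) ^ 2 := by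
        rw [Finset.sum_comm]
        exact Finset.sum_congr rfl fun x _ => Finset.sum_comm
      have hrow : ∀ x ∈ A, ((A.card : ℝ) - 1) * (t ^ 2 * n) ≤
          ∑ y ∈ A, ∑ i, (x i - y i) ^ 2 := by
        intro x hx
        calc ((A.card : ℝ) - 1) * (t ^ 2 * n) = ∑ y ∈ A.erase x, t ^ 2 * n := by
              rw [Finset.sum_const, nsmul_eq_mul, Finset.card_erase_of_mem hx,
                Nat.cast_sub (by omega), Nat.cast_one]
          _ ≤ ∑ y ∈ A.erase x, ∑ i, (x i - y i) ^ 2 :=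
              Finset.sum_le_sum fun y hy => hsep x hx y (Finset.mem_of_mem_erase hy)
                (Finset.ne_of_mem_erase hy).symm
          _ ≤ _ := Finset.sum_le_sum_of_subset_of_nonneg (Finset.erase_subset _ _)
              fun y _ _ => Finset.sum_nonneg fun i _ => sq_nonneg _
      rw [hswap]
      refine le_trans ?_ (Finset.card_nsmul_le_sum _ _ _ hrow)
      rw [nsmul_eq_mul]
      have : (A.card : ℝ) ^ 2 / 2 ≤ A.card * ((A.card : ℝ) - 1) := by nlinarith
      calc t ^ 2 * n * ((A.card : ℝ) ^ 2 / 2) ≤ t ^ 2 * n * (A.card * ((A.card : ℝ) - 1)) := by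
            gcongr
        _ = _ := by ring
    have hupper : ∀ i, ∑ x ∈ A, ∑ y ∈ A, (x i - y i) ^ 2 ≤
        3 / 8 * t ^ 2 * (A.card : ℝ) ^ 2 + if i ∈ I then 4 * (A.card : ℝ) ^ 2 else 0 := by
      intro i
      by_cases hi : i ∈ I
      · rw [if_pos hi]
        have : ∑ x ∈ A, ∑ y ∈ A, (x i - y i) ^ 2 ≤ ∑ x ∈ A, ∑ y ∈ A, (4 : ℝ) := by
          refine Finset.sum_le_sum fun x hx => Finset.sum_le_sum fun y hy => ?_
          have hx1 := abs_le.1 (hA x hx i)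
          have hy1 := abs_le.1 (hA y hy i)
          calc (x i - y i) ^ 2 ≤ 2 ^ 2 := sq_le_sq' (by linarith) (by linarith)
            _ = 4 := by norm_num
        simp only [Finset.sum_const, nsmul_eq_mul] at this
        have h0 : 0 ≤ 3 / 8 * t ^ 2 * (A.card : ℝ) ^ 2 := by positivity
        linarith
      · rw [if_neg hi, add_zero]
        refine (sum_sq_le_of_not_split hs hεpos hε1 hA hne i fun j hj => ?_).trans_eq ?_
        · by_contra! h
          exact hi (Finset.mem_filter.2 ⟨Finset.mem_univ _, j, h, hj⟩)
        · rw [hε]; ring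
    have htot := hlower.trans (Finset.sum_le_sum fun i _ => hupper i)
    rw [Finset.sum_add_distrib, Finset.sum_const, nsmul_eq_mul, ← Finset.sum_filter,
      Finset.filter_mem_eq_inter, Finset.univ_inter, Finset.sum_const, nsmul_eq_mul,
      Finset.card_univ, Fintype.card_fin] at htot
    have hN2 : 0 < (A.card : ℝ) ^ 2 := by positivity
    refine le_of_mul_le_mul_right ?_ hN2
    linarith
  · intro q hq
    obtain ⟨i, hi, rfl⟩ := Finset.mem_image.1 hq
    exact hJ i hi

/-! ### The entropy bound -/

/-- The entropy bound with a separated set in place of a cover: compare the two bounds on the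
weighted number of sets of grid cells shattered by `A`. -/
theorem log_card_le_of_separated {n : ℕ} {K : Set (Fin n → ℝ)} {t : ℝ} (hK : Convex ℝ K)
    (hKc : K ⊆ cubeBall n) (ht : 0 < t) (ht1 : t < 1) {A : Finset (Fin n → ℝ)}
    (hAK : (A : Set (Fin n → ℝ)) ⊆ K)
    (hsep : ∀ x ∈ A, ∀ y ∈ A, x ≠ y → t ^ 2 * n ≤ ∑ i, (x i - y i) ^ 2) :
    Real.log A.card ≤ 273 * (Real.log (2 / t)) ^ 2 * vcDim K (t / 4) := by
  classical
  have hRHS : 0 ≤ 273 * (Real.log (2 / t)) ^ 2 * (vcDim K (t / 4) : ℝ) := by positivity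
  rcases Nat.lt_or_ge A.card 2 with h1 | h2
  · have : Real.log A.card = 0 := by interval_cases A.card <;> simp
    rwa [this]
  have hn : 0 < n := by
    rcases Nat.eq_zero_or_pos n with rfl | h
    · have := Finset.card_le_one_of_subsingleton A
      omega
    · exact h
  have hn' : (0 : ℝ) < n := by exact_mod_cast hn
  have hA : ∀ x ∈ A, ∀ i, |x i| ≤ 1 := fun x hx i => hKc (hAK hx) i
  have hne : A.Nonempty := Finset.card_pos.1 (by omega)
  have hs : 0 < t / 4 := by positivity
  set d := vcDim K (t / 4) with hd
  have hd0 : (0 : ℝ) ≤ d := Nat.cast_nonneg d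
  set U : Finset (Fin n × ℤ) := Finset.univ ×ˢ Finset.Icc (-⌈4 / t⌉) ⌈4 / t⌉ with hU
  have hUcard : (U.card : ℝ) ≤ n * (11 / t) := by
    rw [hU, Finset.card_product, Finset.card_univ, Fintype.card_fin, Int.card_Icc, Nat.cast_mul]
    gcongr
    have h0 : 0 ≤ ⌈4 / t⌉ := Int.ceil_nonneg (by positivity)
    have h3 : (((⌈4 / t⌉ + 1 - -⌈4 / t⌉).toNat : ℤ) : ℝ) = 2 * (⌈4 / t⌉ : ℝ) + 1 := by
      rw [Int.toNat_of_nonneg (by omega)]; push_cast; ring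
    rw [Int.cast_natCast] at h3
    rw [h3]
    have h4 := (Int.ceil_lt_add_one (4 / t)).le
    have h5 : 1 ≤ 1 / t := by rw [le_div_iff₀ ht]; linarith
    have h6 : 4 / t = 4 * (1 / t) := by ring
    have h7 : 11 / t = 11 * (1 / t) := by ring
    rw [h7]
    linarith
  -- chosen so that `t ^ 2 * n / 32 * w = 3 * (d + 1)`
  set w : ℝ := 96 * ((d : ℝ) + 1) / (n * t ^ 2) with hw
  have hwpos : 0 < w := by positivity
  have hTw : U.card * w ≤ 1056 / t ^ 3 * ((d : ℝ) + 1) := by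
    calc U.card * w ≤ n * (11 / t) * w := by gcongr
      _ = _ := by rw [hw]; field_simp; norm_num
  have hT : 1 ≤ 1056 / t ^ 3 := by
    rw [le_div_iff₀ (by positivity)]
    have : t ^ 3 ≤ 1 := pow_le_one₀ ht.le ht1.le
    linarith
  have hl2 : 0 < Real.log 2 := Real.log_pos (by norm_num)
  have hlt : Real.log t ≤ 0 := Real.log_nonpos ht.le ht1.le
  set ℓ : ℝ := Real.log (2 / t) with hℓ
  have hℓ' : ℓ = Real.log 2 - Real.log t := Real.log_div (by norm_num) ht.ne'
  have hℓpos : 0 < ℓ := by linarith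
  have hlog32 : 1 / 3 ≤ Real.log (3 / 2) := by
    have := Real.one_sub_inv_le_log_of_pos (x := 3 / 2) (by norm_num)
    norm_num at this
    linarith
  set α : ℝ := 1 / (21 * ℓ) with hα
  have hαpos : 0 < α := by positivity
  have hεα : 1 ≤ 3 / 2 * (t ^ 2 / 128) ^ α := by
    have hlogε : Real.log (t ^ 2 / 128) = 2 * Real.log t - 7 * Real.log 2 := by
      rw [Real.log_div (by positivity) (by norm_num), Real.log_pow,
        show (128 : ℝ) = 2 ^ 7 by norm_num, Real.log_pow]
      norm_num
    rw [← Real.log_nonneg_iff (by positivity), Real.log_mul (by norm_num) (by positivity),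
      Real.log_rpow (by positivity), hlogε]
    have : α * (-(7 * ℓ)) ≤ α * (2 * Real.log t - 7 * Real.log 2) := by
      gcongr
      linarith
    have h8 : α * (-(7 * ℓ)) = -(1 / 3) := by rw [hα]; field_simp; norm_num
    linarith
  have hcell : ∀ q x, ¬ (cellHi n (t / 4) q x ∧ cellLo n (t / 4) q x) := by
    rintro q x ⟨h, h'⟩
    unfold cellHi at h
    unfold cellLo at h'
    linarith
  have hdA : ∀ p, Shatters (cellHi n (t / 4)) (cellLo n (t / 4)) A p → p.card ≤ d :=
    fun p hp => hp.card_le_vcDim hs hK hAK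
  have hlow := card_rpow_le_shatWeight (U := U) (ε := t ^ 2 / 128) hwpos (by positivity)
    hαpos.le hεα hcell hdA (fun B hB hB2 => by
      obtain ⟨G, hGU, hGc, hG⟩ := exists_many_splits ht ht1 (fun x hx => hA x (hB hx)) hB2
        (fun x hx y hy => hsep x (hB hx) y (hB hy))
      refine ⟨G, hGU, ?_, hG⟩
      calc 3 * ((d : ℝ) + 1) = t ^ 2 * n / 32 * w := by rw [hw]; field_simp; norm_num
        _ ≤ _ := by gcongr) hne
  have hup := shatWeight_le (U := U) hwpos.le hT hdA hTw
  have hApos : (0 : ℝ) < A.card := by exact_mod_cast hne.card_pos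
  have hmain := Real.log_le_log (by positivity) (hlow.trans hup)
  rw [Real.log_rpow hApos, Real.log_mul (by positivity) (by positivity), Real.log_exp,
    Real.log_pow] at hmain
  have hlogT : Real.log (2 * (1056 / t ^ 3)) + 1 ≤ 13 * ℓ := by
    have he : Real.log 2112 + 1 ≤ 13 * Real.log 2 := by
      have h9 : Real.log (2112 * Real.exp 1) ≤ Real.log (2 ^ 13) := by
        gcongr
        have := Real.exp_one_lt_d9
        norm_num
        linarith
      rw [Real.log_mul (by norm_num) (by positivity), Real.log_exp, Real.log_pow] at h9
      exact_mod_cast h9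
    rw [show 2 * (1056 / t ^ 3) = 2112 / t ^ 3 by ring, Real.log_div (by norm_num) (by positivity),
      Real.log_pow]
    push_cast
    linarith
  have h10 : α * Real.log A.card ≤ d * (13 * ℓ) := by
    calc α * Real.log A.card ≤ d * (Real.log (2 * (1056 / t ^ 3)) + 1) := by linarith
      _ ≤ _ := by gcongr
  calc Real.log A.card = 21 * ℓ * (α * Real.log A.card) := by rw [hα]; field_simp
    _ ≤ 21 * ℓ * (d * (13 * ℓ)) := by gcongr
    _ = _ := by ring

theorem entropy_le_vc_convex_body :
    ∃ C : ℝ, 0 < C ∧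
      ∀ (n : ℕ) (K : Set (Fin n → ℝ)) (t : ℝ),
        IsCompact K → Convex ℝ K → (interior K).Nonempty → K ⊆ cubeBall n →
        0 < t → t < 1 →
        Real.log (covN K (Real.sqrt n • ball2 n) t) ≤
          C * (Real.log (2 / t)) ^ 2 * vcDim K (t / 4) := by
  classical
  refine ⟨273, by norm_num, fun n K t _ hK _ hKc ht ht1 => ?_⟩
  set R : ℝ := 273 * (Real.log (2 / t)) ^ 2 * vcDim K (t / 4) with hR
  set sep : Finset (Fin n → ℝ) → Prop := fun A => (A : Set (Fin n → ℝ)) ⊆ K ∧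
    ∀ x ∈ A, ∀ y ∈ A, x ≠ y → t ^ 2 * n ≤ ∑ i, (x i - y i) ^ 2 with hsep
  have hbound : ∀ A, sep A → Real.log A.card ≤ R :=
    fun A hA => log_card_le_of_separated hK hKc ht ht1 hA.1 hA.2
  -- the entropy bound itself guarantees a separated set of maximal cardinality
  obtain ⟨A, hA, hmax⟩ : ∃ A, sep A ∧ ∀ B, sep B → B.card ≤ A.card := by
    have hbdd : ∀ m, (∃ A, sep A ∧ A.card = m) → m ≤ ⌊Real.exp R⌋₊ := by
      rintro m ⟨A, hA, rfl⟩
      rcases Nat.eq_zero_or_pos A.card with h0 | h0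
      · omega
      · refine Nat.le_floor ?_
        rw [← Real.log_le_iff_le_exp (by exact_mod_cast h0)]
        exact hbound A hA
    have h0 : ∃ A, sep A ∧ A.card = 0 := ⟨∅, ⟨by simp, by simp⟩, rfl⟩
    obtain ⟨A, hA, hAc⟩ := Nat.findGreatest_spec (P := fun m => ∃ A, sep A ∧ A.card = m)
      (Nat.zero_le ⌊Real.exp R⌋₊) h0
    refine ⟨A, hA, fun B hB => ?_⟩
    rw [hAc]
    exact Nat.le_findGreatest (hbdd _ ⟨B, hB, rfl⟩) ⟨B, hB, rfl⟩
  have hcov : covN K (Real.sqrt n • ball2 n) t ≤ A.card := by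
    refine Nat.sInf_le ⟨A, rfl, fun y hy => ?_⟩
    obtain ⟨c, hc, hcy⟩ : ∃ c ∈ A, ∑ i, (y i - c i) ^ 2 ≤ t ^ 2 * n := by
      by_cases hyA : y ∈ A
      · exact ⟨y, hyA, by simp; positivity⟩
      by_contra! hfar
      have hins : sep (insert y A) := by
        refine ⟨by simpa [Set.insert_subset_iff] using ⟨hy, hA.1⟩, fun a ha b hb hab => ?_⟩
        rcases Finset.mem_insert.1 ha with rfl | ha'
        · rcases Finset.mem_insert.1 hb with rfl | hb
          · exact absurd rfl hab
          · exact (hfar b hb).le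
        · rcases Finset.mem_insert.1 hb with rfl | hb
          · refine (hfar a ha').le.trans_eq (Finset.sum_congr rfl fun i _ => by ring)
          · exact hA.2 a ha' b hb hab
      have := hmax _ hins
      rw [Finset.card_insert_of_notMem hyA] at this
      omega
    refine Set.mem_iUnion₂.2 ⟨c, hc, y - c, ?_, by simp⟩
    rcases Nat.eq_zero_or_pos n with rfl | hn
    · refine Set.mem_smul_set.2 ⟨0, Set.mem_smul_set.2 ⟨0, by simp [ball2], by simp⟩,
        Subsingleton.elim _ _⟩
    have hn' : (0 : ℝ) < n := by exact_mod_cast hn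
    have hsn : 0 < Real.sqrt n := Real.sqrt_pos.2 hn'
    rw [Set.mem_smul_set_iff_inv_smul_mem₀ ht.ne', Set.mem_smul_set_iff_inv_smul_mem₀ hsn.ne']
    show ∑ i, (((Real.sqrt n)⁻¹ • t⁻¹ • (y - c)) i) ^ 2 ≤ 1
    simp only [Pi.smul_apply, Pi.sub_apply, smul_eq_mul, mul_pow, inv_pow,
      Real.sq_sqrt hn'.le, ← Finset.mul_sum]
    rw [inv_mul_le_iff₀ hn', inv_mul_le_iff₀ (by positivity)]
    linarith
  rcases Nat.eq_zero_or_pos (covN K (Real.sqrt n • ball2 n) t) with h0 | h0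
  · rw [h0]
    simp only [Nat.cast_zero, Real.log_zero]
    positivity
  · refine (Real.log_le_log (by exact_mod_cast h0) ?_).trans (hbound A hA)
    exact_mod_cast hcov
end

section
/- Let A ⊂ B_∞^n, and let 0 < t < 1 and 0 < ε < t/8. Then N(A, B_∞^n, t) ≤ (C/ε)^{(2ε/t)n} · N(A, nB_1^n, ε), where C is an absolute constant. -/
/-!
The bound comes from covering each translate `c + εn B₁ⁿ` by cubes separately.
If `x = c + y` with `∑ |y i| ≤ εn`, then at most `m = εn/t` coordinates satisfy `|y i| > t`
(Markov's inequality). On the other coordinates `c i` approximates `x i` up to `t`;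
on the exceptional ones `x i ∈ [-1,1]` is approximated by one of at most `2/t` points of a
one-dimensional `t`-net `g` (`exists_net_interval`). So the cubes are indexed by functions
`Fin n → Option g` taking at most `m` values different from `none` (`sparse`).

The number of such functions is bounded by an exponential-moment argument (`card_sparse_le`):
giving weight `w = ε/2 ≤ 1` to each coordinate that is not `none`, a sparse function has weight at
least `w ^ m`, while all functions together have weight
`(1 + w * #g) ^ n ≤ (1 + ε/t) ^ n ≤ exp m`. Hence there are at most `(2e/ε) ^ m` of them, and
`C = 2e` works.

Since covering numbers are infima in `ℕ`, with value `0` if there is no finite cover, the existence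
of a finite cover by translates of `εn B₁ⁿ` has to be established as well; it is given by the
product of one-dimensional `ε`-nets.
-/

open Pointwise

/-- The unit ball `B_1ⁿ` of `ℓ_1ⁿ`. -/
def ball1 (n : ℕ) : Set (Fin n → ℝ) := {x | ∑ i, |x i| ≤ 1}

/-- The interval `[-1,1]` has a `t`-net with at most `2 / t` points. -/
lemma exists_net_interval {t : ℝ} (h0 : 0 < t) (h1 : t < 1) :
    ∃ g : Finset ℝ, (g.card : ℝ) ≤ 2 / t ∧ ∀ x : ℝ, |x| ≤ 1 → ∃ p ∈ g, |x - p| ≤ t := by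
  refine ⟨(Finset.range ⌈1 / t⌉₊).image (fun j : ℕ => -1 + (2 * (j : ℝ) + 1) * t), ?_, ?_⟩
  · have h2 : (((Finset.range ⌈1 / t⌉₊).image
        (fun j : ℕ => -1 + (2 * (j : ℝ) + 1) * t)).card : ℝ) ≤ (⌈1 / t⌉₊ : ℝ) := by
      exact_mod_cast Finset.card_image_le.trans (by simp)
    have h3 : (⌈1 / t⌉₊ : ℝ) < 1 / t + 1 := Nat.ceil_lt_add_one (by positivity)
    have h4 : 1 ≤ 1 / t := by rw [le_div_iff₀ h0]; linarith
    have h5 : 2 / t = 1 / t + 1 / t := by ring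
    linarith
  · intro x hx
    obtain ⟨hl, hu⟩ := abs_le.mp hx
    -- The net consists of the midpoints of consecutive intervals of length `2t`
    -- starting at `-1`. The floor picks the interval containing `x`, except at `x = 1`, where it
    -- may exceed the last index.
    by_cases hx1 : x < 1
    · have hq : 0 ≤ (x + 1) / (2 * t) := div_nonneg (by linarith) (by linarith)
      have ha := Nat.floor_le hq
      have hb := Nat.lt_floor_add_one ((x + 1) / (2 * t))
      rw [le_div_iff₀ (by linarith)] at ha
      rw [div_lt_iff₀ (by linarith)] at hb
      refine ⟨_, Finset.mem_image_of_mem _ (a := ⌊(x + 1) / (2 * t)⌋₊) ?_, ?_⟩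
      · rw [Finset.mem_range, Nat.floor_lt hq]
        refine lt_of_lt_of_le ?_ (Nat.le_ceil _)
        rw [div_lt_div_iff₀ (by linarith) h0]
        nlinarith
      · rw [abs_le]; constructor <;> nlinarith
    · have hx1 : x = 1 := le_antisymm hu (not_lt.mp hx1)
      have hpos : 0 < ⌈1 / t⌉₊ := Nat.ceil_pos.mpr (by positivity)
      have hc := Nat.le_ceil (1 / t)
      have hd : (⌈1 / t⌉₊ : ℝ) < 1 / t + 1 := Nat.ceil_lt_add_one (by positivity)
      rw [div_le_iff₀ h0] at hc
      have he : (⌈1 / t⌉₊ : ℝ) * t < 1 + t := by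
        calc _ < (1 / t + 1) * t := by gcongr
          _ = 1 + t := by field_simp
      refine ⟨_, Finset.mem_image_of_mem _ (a := ⌈1 / t⌉₊ - 1) ?_, ?_⟩
      · rw [Finset.mem_range]; omega
      · rw [Nat.cast_sub (by omega), hx1, abs_le]
        push_cast
        constructor <;> nlinarith

lemma mem_smul_cubeBall {n : ℕ} {t : ℝ} (ht : 0 < t) {y : Fin n → ℝ} (hy : ∀ i, |y i| ≤ t) :
    y ∈ t • cubeBall n := by
  rw [Set.mem_smul_set_iff_inv_smul_mem₀ ht.ne']
  intro i
  rw [Pi.smul_apply, smul_eq_mul, abs_mul, abs_of_pos (inv_pos.mpr ht), inv_mul_le_iff₀ ht]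
  simpa using hy i

lemma mem_smul_ball1_iff {n : ℕ} {ε : ℝ} (hε : 0 < ε) {y : Fin n → ℝ} :
    y ∈ ε • ((n : ℝ) • ball1 n) ↔ ∑ i, |y i| ≤ ε * n := by
  constructor
  · rintro ⟨_, ⟨b, hb, rfl⟩, rfl⟩
    have hb : ∑ i, |b i| ≤ 1 := hb
    have : ∀ i, |(ε • ((n : ℝ) • b)) i| = (ε * n) * |b i| := fun i => by
      simp [abs_mul, abs_of_pos hε, mul_assoc]
    simp only [this, ← Finset.mul_sum]
    exact mul_le_of_le_one_right (by positivity) hb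
  · intro h
    refine ⟨(n : ℝ) • fun i => y i / (ε * n), ⟨_, ?_, rfl⟩, ?_⟩
    · change ∑ i, |y i / (ε * n)| ≤ 1
      have hn : 0 ≤ ε * n := by positivity
      simp only [abs_div, abs_of_nonneg hn, ← Finset.sum_div]
      exact div_le_one_of_le₀ h hn
    · ext i
      -- The existence of an index gives `n ≠ 0`.
      have hn : (n : ℝ) ≠ 0 := by exact_mod_cast (Fin.pos i).ne'
      simp only [Pi.smul_apply, smul_eq_mul]
      field_simp

lemma covN_le_card {V : Type*} [AddCommGroup V] [Module ℝ V] {K B : Set V} {t : ℝ}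
    (s : Finset V) (h : ∀ x ∈ K, ∃ c ∈ s, x - c ∈ t • B) : covN K B t ≤ s.card := by
  refine Nat.sInf_le ⟨s, rfl, fun x hx => ?_⟩
  obtain ⟨c, hc, hxc⟩ := h x hx
  exact Set.mem_iUnion₂.mpr ⟨c, hc, x - c, hxc, by simp⟩

/-- If some finite cover exists, then `covN` is attained by a finite cover. -/
lemma exists_cover_card_eq_covN {V : Type*} [AddCommGroup V] [Module ℝ V] {K B : Set V} {t : ℝ}
    (s : Finset V) (h : ∀ x ∈ K, ∃ c ∈ s, x - c ∈ t • B) :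
    ∃ s' : Finset V, s'.card = covN K B t ∧ ∀ x ∈ K, ∃ c ∈ s', x - c ∈ t • B := by
  have hne : {m : ℕ | ∃ s : Finset V, s.card = m ∧
      K ⊆ ⋃ c ∈ s, (fun y => c + y) '' (t • B)}.Nonempty := by
    refine ⟨s.card, s, rfl, fun x hx => ?_⟩
    obtain ⟨c, hc, hxc⟩ := h x hx
    exact Set.mem_iUnion₂.mpr ⟨c, hc, x - c, hxc, by simp⟩
  obtain ⟨s', hs', hcov⟩ := Nat.sInf_mem hne
  refine ⟨s', hs', fun x hx => ?_⟩
  obtain ⟨c, hc, y, hy, hxy⟩ := Set.mem_iUnion₂.mp (hcov hx)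
  refine ⟨c, hc, ?_⟩
  rw [← hxy]
  simpa using hy

/-- The functions `Fin n → Option g` with at most `m` coordinates different from `none`: such a
function prescribes a net point on few coordinates, and nothing (`none`) on the others. -/
noncomputable def sparse (n : ℕ) (g : Finset ℝ) (m : ℝ) : Finset (Fin n → Option ℝ) :=
  open Classical in
  {f ∈ Fintype.piFinset (fun _ : Fin n => Finset.insertNone g) |
    ((Finset.univ.filter (fun i => f i ≠ none)).card : ℝ) ≤ m}

/-- Exponential-moment bound for the number of sparse functions, with weight `w` for each
coordinate different from `none`. -/
lemma card_sparse_le (n : ℕ) (g : Finset ℝ) (m : ℝ) {w : ℝ} (hw : 0 < w) (hw1 : w ≤ 1) :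
    ((sparse n g m).card : ℝ) * w ^ m ≤ (1 + g.card * w) ^ n := by
  classical
  let W : Option ℝ → ℝ := fun o => o.elim 1 (fun _ => w)
  have hW : ∀ o, 0 ≤ W o := by
    rintro (_ | _)
    · exact zero_le_one
    · exact hw.le
  have hprod : ∀ f : Fin n → Option ℝ,
      ∏ i, W (f i) = w ^ (Finset.univ.filter (fun i => f i ≠ none)).card := by
    intro f
    rw [← Finset.prod_const, Finset.prod_filter]
    refine Finset.prod_congr rfl fun i _ => ?_
    cases hfi : f i <;> simp [W]
  calc ((sparse n g m).card : ℝ) * w ^ m = ∑ f ∈ sparse n g m, w ^ m := by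
        rw [Finset.sum_const, nsmul_eq_mul]
    _ ≤ ∑ f ∈ sparse n g m, ∏ i, W (f i) := by
        refine Finset.sum_le_sum fun f hf => ?_
        rw [hprod, ← Real.rpow_natCast]
        exact Real.rpow_le_rpow_of_exponent_ge hw hw1 (Finset.mem_filter.mp hf).2
    _ ≤ ∑ f ∈ Fintype.piFinset (fun _ : Fin n => Finset.insertNone g), ∏ i, W (f i) :=
        Finset.sum_le_sum_of_subset_of_nonneg (Finset.filter_subset _ _)
          fun f _ _ => Finset.prod_nonneg fun i _ => hW _
    _ = (1 + g.card * w) ^ n := by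
        rw [Finset.sum_prod_piFinset (Finset.insertNone g) (fun _ o => W o)]
        simp [W]

theorem cube_entropy_le_ell1_entropy :
    ∃ C : ℝ, 0 < C ∧
      ∀ (n : ℕ) (A : Set (Fin n → ℝ)) (t ε : ℝ),
        A ⊆ cubeBall n → 0 < t → t < 1 → 0 < ε → ε < t / 8 →
        (covN A (cubeBall n) t : ℝ) ≤
          (C / ε) ^ ((2 * ε / t) * n) * (covN A ((n : ℝ) • ball1 n) ε : ℝ) := by
  refine ⟨2 * Real.exp 1, by positivity, fun n A t ε hA ht ht1 hε hεt => ?_⟩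
  classical
  -- A finite cover by `ℓ₁` balls, and then an optimal one.
  obtain ⟨gε, -, hgε⟩ := exists_net_interval hε (by linarith)
  obtain ⟨s, hs, hscov⟩ := exists_cover_card_eq_covN (K := A) (B := (n : ℝ) • ball1 n) (t := ε)
    (Fintype.piFinset fun _ : Fin n => gε) (fun x hx => by
      choose p hp hxp using fun i => hgε (x i) (hA hx i)
      refine ⟨p, Fintype.mem_piFinset.mpr hp, (mem_smul_ball1_iff hε).mpr ?_⟩
      calc ∑ i, |(x - p) i| ≤ ∑ _i : Fin n, ε := Finset.sum_le_sum fun i _ => hxp i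
        _ = ε * n := by simp [mul_comm])
  obtain ⟨g, hgcard, hg⟩ := exists_net_interval ht ht1
  set m : ℝ := ε / t * n with hm
  have hcount : ((sparse n g m).card : ℝ) ≤ (2 * Real.exp 1 / ε) ^ m := by
    have h1 := card_sparse_le n g m (w := ε / 2) (by positivity) (by linarith)
    have h2 : (1 + g.card * (ε / 2)) ^ n ≤ Real.exp 1 ^ m := by
      have h3 : 1 + g.card * (ε / 2) ≤ Real.exp (ε / t) := by
        calc 1 + g.card * (ε / 2) ≤ 1 + 2 / t * (ε / 2) := by gcongr
          _ = ε / t + 1 := by ring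
          _ ≤ _ := Real.add_one_le_exp _
      calc (1 + g.card * (ε / 2)) ^ n ≤ Real.exp (ε / t) ^ n := by gcongr
        _ = Real.exp 1 ^ m := by
          rw [← Real.exp_nat_mul, Real.exp_one_rpow, hm, mul_comm]
    have h4 : (2 * Real.exp 1 / ε) = Real.exp 1 / (ε / 2) := by field_simp
    rw [h4, Real.div_rpow (by positivity) (by positivity), le_div_iff₀ (by positivity)]
    exact h1.trans h2
  have hcover : covN A (cubeBall n) t ≤ (s ×ˢ sparse n g m).card := by
    refine (covN_le_card ((s ×ˢ sparse n g m).image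
      fun q i => (q.2 i).elim (q.1 i) id) fun x hx => ?_).trans Finset.card_image_le
    obtain ⟨c, hc, hxc⟩ := hscov x hx
    rw [mem_smul_ball1_iff hε] at hxc
    choose p hp hxp using fun i => hg (x i) (hA hx i)
    let f : Fin n → Option ℝ := fun i => if |x i - c i| ≤ t then none else some (p i)
    refine ⟨_, Finset.mem_image_of_mem _ (a := (c, f)) (Finset.mem_product.mpr ⟨hc, ?_⟩), ?_⟩
    · refine Finset.mem_filter.mpr ⟨Fintype.mem_piFinset.mpr fun i => ?_, ?_⟩
      · by_cases h : |x i - c i| ≤ t <;> simp [f, h, hp]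
      ·
        -- Each coordinate where `f` is not `none` contributes more than `t` to the `ℓ₁` norm.
        have h1 : ((Finset.univ.filter (fun i => f i ≠ none)).card : ℝ) * t ≤ ε * n := by
          calc ((Finset.univ.filter (fun i => f i ≠ none)).card : ℝ) * t
              = ∑ i ∈ Finset.univ.filter (fun i => f i ≠ none), t := by
                rw [Finset.sum_const, nsmul_eq_mul]
            _ ≤ ∑ i ∈ Finset.univ.filter (fun i => f i ≠ none), |(x - c) i| := by
                refine Finset.sum_le_sum fun i hi => ?_
                by_contra! h
                have h' : |x i - c i| ≤ t := h.le
                simp only [f, Finset.mem_filter, if_pos h'] at hi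
                exact hi.2 rfl
            _ ≤ ∑ i, |(x - c) i| :=
                Finset.sum_le_sum_of_subset_of_nonneg (Finset.filter_subset _ _)
                  fun i _ _ => abs_nonneg _
            _ ≤ ε * n := hxc
        have h2 : m = ε * n / t := by rw [hm]; ring
        rw [h2, le_div_iff₀ ht]
        convert h1
    · refine mem_smul_cubeBall ht fun i => ?_
      by_cases h : |x i - c i| ≤ t
      · simp [f, h]
      · simpa [f, h] using hxp i
  have hbase : 1 ≤ 2 * Real.exp 1 / ε := by
    rw [le_div_iff₀ hε]
    have := Real.add_one_le_exp (1 : ℝ)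
    linarith
  calc (covN A (cubeBall n) t : ℝ) ≤ ((s ×ˢ sparse n g m).card : ℝ) := by exact_mod_cast hcover
    _ = (sparse n g m).card * (covN A ((n : ℝ) • ball1 n) ε : ℝ) := by
        rw [Finset.card_product, hs]; push_cast; ring
    _ ≤ (2 * Real.exp 1 / ε) ^ ((2 * ε / t) * n) * (covN A ((n : ℝ) • ball1 n) ε : ℝ) := by
        gcongr
        refine hcount.trans (Real.rpow_le_rpow_of_exponent_le hbase ?_)
        have h0 : 0 ≤ m := by positivity
        have h1 : 2 * ε / t * n = 2 * m := by rw [hm]; ring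
        linarith
end
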